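/- The relation ≺ on I_ID-formulas is wellfounded. -/

import Mathlib

/-!
Accessibility is proved by structural induction on `A`, strengthened to: `A[C/X]` is
accessible for every accessible `C`.  At a fixpoint formula `η^a X.B` substitution does
nothing, and the induction hypothesis for the body `B` says that unfolding preserves
accessibility (`B[D/X]` is accessible whenever `D` is).  Transfinite induction on `ξ`
therefore makes every `η^ξ X.B` accessible, and then `η^∞ X.B` as well, all its predecessors
being unfoldings at ordinal stages.  Taking `C = X`, which has no predecessors, gives the
theorem.
-/

/-!
Shared formalization of the syntax and an abstract interface for the non-wellfounded
sequent calculus with ordinal variables of the paper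
"Intuitionistic ordinary induction and co-induction with ordinal variables".

* `LForm` : formulas of the language `L_ID` with a single fixpoint variable `X`,
  with fixpoint binders annotated by ordinal terms (`∞` or an ordinal variable).
* `IForm` : formulas of the infinitary language `I_ID`, with fixpoint binders annotated
  by `∞` or by actual ordinals.
* `IForm.prec` : the relation `≺` on `I_ID`-formulas.
* `Constraint` : ordinal constraints (finite rooted trees of ordinal variables below `∞`),
  encoded by a parent function.
* `Calc` : an abstract interface for the proof system: (possibly non-wellfounded)
  derivations, typing (`OfC`: derivation of a sequent `O, Γ ⊢ A`), the validity
  condition, the one-step rewrite relation of Section 3 (with `Red` its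
  reflexive-transitive closure), rule-formers (`axTop`, `idAx`, right and left rules,
  multicut `cut`, composition cut `ccut`), the substitution `u[a:=∞]` on derivations,
  the operation `u ↦ u_∞`, and the functorial action `fmap A u = Au` of Section 6.
* `IsCompPred` : the defining clauses of the computability predicate `⟦·⟧` of Section 4.
* `IsEquivMod` : the defining clauses of the equivalence `· ≡ · mod A` of Section 6.
-/

/-- Ordinal variables. -/
abbrev OVar : Type := ℕ

/-- Ordinal terms of the finitary language: the constant `∞` or an ordinal variable. -/
inductive LAnn : Type
  | infty : LAnn
  | ovar : OVar → LAnn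
deriving DecidableEq

/-- Formulas of `L_ID` (with the single fixpoint variable `X` as `var`). -/
inductive LForm : Type
  | var : LForm
  | top : LForm
  | or : LForm → LForm → LForm
  | and : LForm → LForm → LForm
  | imp : LForm → LForm → LForm
  | mu : LAnn → LForm → LForm
  | nu : LAnn → LForm → LForm
deriving DecidableEq

namespace LForm

/-- Substitution `B[C/X]`.  The binders bind `X`, so substitution stops at binders. -/
def subst : LForm → LForm → LForm
  | var, C => C
  | top, _ => top
  | or A B, C => .or (subst A C) (subst B C)
  | and A B, C => .and (subst A C) (subst B C)
  | imp A B, C => .imp (subst A C) (subst B C)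
  | mu a B, _ => .mu a B
  | nu a B, _ => .nu a B

/-- `X` has no free occurrence. -/
def NoX : LForm → Prop
  | var => False
  | top => True
  | or A B => NoX A ∧ NoX B
  | and A B => NoX A ∧ NoX B
  | imp A B => NoX A ∧ NoX B
  | mu _ _ => True
  | nu _ _ => True

/-- Strictly positive in `X`: no free occurrence of `X` in the antecedent of an
implication (the fragment `L⁺(X)`). -/
def SP : LForm → Prop
  | var => True
  | top => True
  | or A B => SP A ∧ SP B
  | and A B => SP A ∧ SP B
  | imp A B => NoX A ∧ SP B
  | mu _ _ => True
  | nu _ _ => True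

/-- Pure formulas: every fixpoint binder is annotated by `∞`. -/
def Pure : LForm → Prop
  | var => True
  | top => True
  | or A B => Pure A ∧ Pure B
  | and A B => Pure A ∧ Pure B
  | imp A B => Pure A ∧ Pure B
  | mu a B => a = LAnn.infty ∧ Pure B
  | nu a B => a = LAnn.infty ∧ Pure B

/-- Substitute the ordinal term `∞` for the ordinal variable `c` in all annotations. -/
def substVarInf (c : OVar) : LForm → LForm
  | var => var
  | top => top
  | or A B => .or (substVarInf c A) (substVarInf c B)
  | and A B => .and (substVarInf c A) (substVarInf c B)
  | imp A B => .imp (substVarInf c A) (substVarInf c B)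
  | mu a B => .mu (if a = LAnn.ovar c then LAnn.infty else a) (substVarInf c B)
  | nu a B => .nu (if a = LAnn.ovar c then LAnn.infty else a) (substVarInf c B)

/-- The finitary formulas `F_ID` (flag `false`) and the fragment `F⁺(X)` (flag `true`):
`A := ⊤ | A∨A | A∧A | μX.B`, `B := A | X | ⊤ | B∨B | B∧B`; no implication, no `ν`. -/
def Finitary : Bool → LForm → Prop
  | b, var => b = true
  | _, top => True
  | b, or A B => Finitary b A ∧ Finitary b B
  | b, and A B => Finitary b A ∧ Finitary b B
  | _, imp _ _ => False
  | _, mu LAnn.infty B => Finitary true B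
  | _, mu (LAnn.ovar _) _ => False
  | _, nu _ _ => False

end LForm

/-- The natural numbers formula `N = μ^∞ X. ⊤ ∨ X`. -/
def natForm : LForm := LForm.mu LAnn.infty (LForm.or LForm.top LForm.var)

/-- Annotations of the infinitary language `I_ID`: `∞` or an actual ordinal. -/
inductive IAnn : Type 1
  | infty : IAnn
  | ord : Ordinal.{0} → IAnn

/-- Formulas of the infinitary language `I_ID`. -/
inductive IForm : Type 1
  | var : IForm
  | top : IForm
  | or : IForm → IForm → IForm
  | and : IForm → IForm → IForm
  | imp : IForm → IForm → IForm
  | mu : IAnn → IForm → IForm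
  | nu : IAnn → IForm → IForm

namespace IForm

/-- Substitution `B[C/X]` for `I_ID`-formulas. -/
def subst : IForm → IForm → IForm
  | var, C => C
  | top, _ => top
  | or A B, C => .or (subst A C) (subst B C)
  | and A B, C => .and (subst A C) (subst B C)
  | imp A B, C => .imp (subst A C) (subst B C)
  | mu a B, _ => .mu a B
  | nu a B, _ => .nu a B

/-- `X` has no free occurrence. -/
def NoX : IForm → Prop
  | var => False
  | top => True
  | or A B => NoX A ∧ NoX B
  | and A B => NoX A ∧ NoX B
  | imp A B => NoX A ∧ NoX B
  | mu _ _ => True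
  | nu _ _ => True

/-- Strictly positive in `X` (the fragment `I⁺(X)`). -/
def SP : IForm → Prop
  | var => True
  | top => True
  | or A B => SP A ∧ SP B
  | and A B => SP A ∧ SP B
  | imp A B => NoX A ∧ SP B
  | mu _ _ => True
  | nu _ _ => True

/-- The underlying pure formula: all ordinal annotations are set to `∞`. -/
def underline : IForm → LForm
  | var => LForm.var
  | top => LForm.top
  | or A B => LForm.or (underline A) (underline B)
  | and A B => LForm.and (underline A) (underline B)
  | imp A B => LForm.imp (underline A) (underline B)
  | mu _ B => LForm.mu LAnn.infty (underline B)
  | nu _ B => LForm.nu LAnn.infty (underline B)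

/-- The relation `≺` on `I_ID`-formulas (Section 4). -/
inductive prec : IForm → IForm → Prop
  | orLeft (A B : IForm) : prec A (.or A B)
  | orRight (A B : IForm) : prec B (.or A B)
  | andLeft (A B : IForm) : prec A (.and A B)
  | andRight (A B : IForm) : prec B (.and A B)
  | impLeft (A B : IForm) : prec A (.imp A B)
  | impRight (A B : IForm) : prec B (.imp A B)
  | muInfty (A : IForm) (ξ : Ordinal.{0}) :
      prec (subst A (.mu (IAnn.ord ξ) A)) (.mu IAnn.infty A)
  | nuInfty (A : IForm) (ξ : Ordinal.{0}) :
      prec (subst A (.nu (IAnn.ord ξ) A)) (.nu IAnn.infty A)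
  | muOrd (A : IForm) {ρ ξ : Ordinal.{0}} (h : ρ < ξ) :
      prec (subst A (.mu (IAnn.ord ρ) A)) (.mu (IAnn.ord ξ) A)
  | nuOrd (A : IForm) {ρ ξ : Ordinal.{0}} (h : ρ < ξ) :
      prec (subst A (.nu (IAnn.ord ρ) A)) (.nu (IAnn.ord ξ) A)

end IForm

namespace LForm

/-- The evident embedding of (pure) `L_ID`-formulas into `I_ID`-formulas. -/
def toI : LForm → IForm
  | var => IForm.var
  | top => IForm.top
  | or A B => IForm.or (toI A) (toI B)
  | and A B => IForm.and (toI A) (toI B)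
  | imp A B => IForm.imp (toI A) (toI B)
  | mu _ B => IForm.mu IAnn.infty (toI B)
  | nu _ B => IForm.nu IAnn.infty (toI B)

/-- Mixed substitution `A[C/X]` of an `I_ID`-formula `C` into an `L_ID`-formula `A`. -/
def isubst : LForm → IForm → IForm
  | var, C => C
  | top, _ => IForm.top
  | or A B, C => IForm.or (isubst A C) (isubst B C)
  | and A B, C => IForm.and (isubst A C) (isubst B C)
  | imp A B, C => IForm.imp (isubst A C) (isubst B C)
  | mu a B, _ => toI (mu a B)
  | nu a B, _ => toI (nu a B)

/-- The `I_ID`-formula `A_f`: annotation `∞` becomes `Ω`, annotation `a` becomes `f a`. -/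
def annotate (Ω : Ordinal.{0}) (f : OVar → Ordinal.{0}) : LForm → IForm
  | var => IForm.var
  | top => IForm.top
  | or A B => IForm.or (annotate Ω f A) (annotate Ω f B)
  | and A B => IForm.and (annotate Ω f A) (annotate Ω f B)
  | imp A B => IForm.imp (annotate Ω f A) (annotate Ω f B)
  | mu LAnn.infty B => IForm.mu (IAnn.ord Ω) (annotate Ω f B)
  | mu (LAnn.ovar a) B => IForm.mu (IAnn.ord (f a)) (annotate Ω f B)
  | nu LAnn.infty B => IForm.nu (IAnn.ord Ω) (annotate Ω f B)
  | nu (LAnn.ovar a) B => IForm.nu (IAnn.ord (f a)) (annotate Ω f B)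

end LForm

/-- An ordinal constraint, encoded by its parent function: `O a = some α` means the
variable `a` is a vertex of the tree whose parent is labelled `α`; `O a = none` means
`a` is not in the tree.  The root is labelled `∞`. -/
def Constraint : Type := OVar → Option LAnn

namespace Constraint

/-- The set of ordinal variables occurring in the constraint. -/
def dom (O : Constraint) : Set OVar := {a | O a ≠ none}

/-- `a` is a child of the vertex labelled `b`. -/
def Child (O : Constraint) (a b : OVar) : Prop := O a = some (LAnn.ovar b)

/-- Wellformedness of a constraint: finitely many vertices, parents are vertices,
and the child relation is acyclic (so the constraint is a finite rooted tree). -/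
def Good (O : Constraint) : Prop :=
  (dom O).Finite ∧ (∀ a b, O.Child a b → O b ≠ none) ∧
    (∀ a, ¬ Relation.TransGen O.Child a a)

/-- The trivial constraint: only the root `∞`. -/
def trivial : Constraint := fun _ => none

/-- `a` is a child of the root `∞`. -/
def childOfRoot (O : Constraint) (a : OVar) : Prop := O a = some LAnn.infty

/-- `O ⊩ α < β` : either `β = ∞`, or `α` labels a proper descendant of the vertex
labelled `β`. -/
def Holds (O : Constraint) (α β : LAnn) : Prop :=
  match α, β with
  | _, LAnn.infty => True
  | LAnn.ovar a, LAnn.ovar b => Relation.TransGen O.Child a b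
  | LAnn.infty, LAnn.ovar _ => False

/-- The constraint `O[∞/c]`: remove the vertex `c` (a child of the root) and attach its
children directly to the root `∞`. -/
def substInf (O : Constraint) (c : OVar) : Constraint := fun x =>
  if x = c then none
  else
    match O x with
    | some (LAnn.ovar b) => if b = c then some LAnn.infty else some (LAnn.ovar b)
    | o => o

end Constraint

/-- A faithful annotation of the variables of the constraint `O` (relative to the fixed
large ordinal `Ω`): values are at most `Ω` and respect the order of the constraint. -/
def Faithful (Ω : Ordinal.{0}) (O : Constraint) (f : OVar → Ordinal.{0}) : Prop :=
  (∀ a ∈ Constraint.dom O, f a ≤ Ω) ∧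
    (∀ a b, O.Holds (LAnn.ovar a) (LAnn.ovar b) → f a < f b)

/-- Abstract interface for the non-wellfounded proof system of the paper:
derivations, typing, validity, the one-step rewrite relation of Section 3, and the
derivation-forming operations used in Sections 3–6.  The fields `step_iff` and
`valid_step` record that reduction preserves the end sequent and validity. -/
structure Calc where
  /-- (possibly non-wellfounded) derivations / proof terms -/
  Deriv : Type
  /-- `OfC u O Γ A`: `u` is a derivation of the sequent `O, Γ ⊢ A` -/
  OfC : Deriv → Constraint → List LForm → LForm → Prop
  /-- the validity condition: every infinite branch carries an infinite descending
  chain of ordinal variables -/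
  Valid : Deriv → Prop
  /-- the one-step rewrite relation `⟶¹` of Section 3 (cut reductions and
  right-permutations, applied only to lowest reducible cuts) -/
  Step : Deriv → Deriv → Prop
  /-- `Premise u' u`: `u'` is one of the immediate subderivations (premisses of the
  last rule) of `u` -/
  Premise : Deriv → Deriv → Prop
  /-- the axiom `ax_⊤` -/
  axTop : Deriv
  /-- the identity axiom `id` for a formula -/
  idAx : LForm → Deriv
  /-- the right disjunction rule `∨_R^i` -/
  orR : Bool → Deriv → Deriv
  /-- the right conjunction rule `∧_R` -/
  andR : Deriv → Deriv → Deriv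
  /-- the right implication rule `→_R` (binding the distinguished assumption) -/
  impR : Deriv → Deriv
  /-- the right `μ`-rule `μ_R(∞,∞,·)` -/
  muR : Deriv → Deriv
  /-- the right `ν`-rule `ν_R(∞,a,·)` with eigenvariable `a` -/
  nuR : OVar → Deriv → Deriv
  /-- the left `μ`-rule `μ_L(∞,a,·)` with eigenvariable `a` -/
  muL : OVar → Deriv → Deriv
  /-- the left `ν`-rule `ν_L(∞,∞,·)` -/
  nuL : Deriv → Deriv
  /-- the substitution `u[a := ∞]` of Figure 5 -/
  substInf : Deriv → OVar → Deriv
  /-- `u_∞`: repeatedly substitute `∞` for the children of `∞` until the constraint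
  of the end sequent is trivial -/
  toInf : Deriv → Deriv
  /-- multicut of a list of closed derivations against a derivation with a context -/
  cut : List Deriv → Deriv → Deriv
  /-- `ccut u v`: the cut composing `u : A ⊢ B` with `v : B ⊢ C` (i.e. `v ∘ u`) -/
  ccut : Deriv → Deriv → Deriv
  /-- `fmap A u = Au`: the functorial action of a strictly positive formula `A` on a
  proof `u : B ⊢ C`, as defined in Section 6 -/
  fmap : LForm → Deriv → Deriv
  /-- one-step reduction preserves the end sequent -/
  step_iff : ∀ {u v : Deriv}, Step u v → ∀ O Γ A, (OfC u O Γ A ↔ OfC v O Γ A)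
  /-- one-step reduction preserves validity -/
  valid_step : ∀ {u v : Deriv}, Step u v → Valid u → Valid v

namespace Calc

variable (P : Calc)

/-- Derivation of a trivial-constraint sequent `Γ ⊢ A`. -/
def Of (u : P.Deriv) (Γ : List LForm) (A : LForm) : Prop :=
  P.OfC u Constraint.trivial Γ A

/-- The rewrite relation `⟶`: reflexive-transitive closure of one-step rewriting. -/
def Red : P.Deriv → P.Deriv → Prop := Relation.ReflTransGen P.Step

/-- Normal form: no one-step rewrite applies. -/
def NormalForm (u : P.Deriv) : Prop := ∀ v, ¬ P.Step u v

/-- Normalizing: rewrites to some normal form. -/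
def Normalizing (u : P.Deriv) : Prop := ∃ v, P.Red u v ∧ P.NormalForm v

end Calc

/-- The defining clauses of the computability predicate `⟦·⟧` of Section 4:
`K A` is the set of computable closed derivations of `⊢ underline A`. -/
def IsCompPred (P : Calc) (K : IForm → Set P.Deriv) : Prop :=
  (∀ A u, u ∈ K A → P.Of u [] (IForm.underline A)) ∧
  (∀ u, u ∈ K IForm.top ↔ P.Red u P.axTop) ∧
  (∀ A B u, u ∈ K (IForm.and A B) ↔
      ∃ v w, P.Red u (P.andR v w) ∧ v ∈ K A ∧ w ∈ K B) ∧
  (∀ A B u, u ∈ K (IForm.or A B) ↔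
      ((∃ v, P.Red u (P.orR false v) ∧ v ∈ K A) ∨
        (∃ v, P.Red u (P.orR true v) ∧ v ∈ K B))) ∧
  (∀ A B u, u ∈ K (IForm.imp A B) ↔
      ∃ v, P.Red u (P.impR v) ∧ ∀ w ∈ K A, P.cut [w] v ∈ K B) ∧
  (∀ A u, u ∈ K (IForm.mu IAnn.infty A) ↔
      ∃ ξ : Ordinal.{0}, u ∈ K (IForm.mu (IAnn.ord ξ) A)) ∧
  (∀ A u, u ∈ K (IForm.nu IAnn.infty A) ↔
      ∀ ξ : Ordinal.{0}, u ∈ K (IForm.nu (IAnn.ord ξ) A)) ∧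
  (∀ A (ξ : Ordinal.{0}) u, u ∈ K (IForm.mu (IAnn.ord ξ) A) ↔
      ∃ ρ < ξ, ∃ v, P.Red u (P.muR v) ∧
        v ∈ K (IForm.subst A (IForm.mu (IAnn.ord ρ) A))) ∧
  (∀ A (ξ : Ordinal.{0}) u, u ∈ K (IForm.nu (IAnn.ord ξ) A) ↔
      ∃ a v, P.Red u (P.nuR a v) ∧
        ∀ ρ < ξ, P.substInf v a ∈ K (IForm.subst A (IForm.nu (IAnn.ord ρ) A)))

/-- The defining clauses of the relation `u ≡ v mod A` of Section 6. -/
def IsEquivMod (P : Calc) (E : IForm → P.Deriv → P.Deriv → Prop) : Prop :=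
  (∀ u v, E IForm.top u v ↔ (P.Red u P.axTop ∧ P.Red v P.axTop)) ∧
  (∀ A B u v, E (IForm.and A B) u v ↔
      ∃ u₀ u₁ v₀ v₁, P.Red u (P.andR u₀ u₁) ∧ P.Red v (P.andR v₀ v₁) ∧
        E A u₀ v₀ ∧ E B u₁ v₁) ∧
  (∀ A B u v, E (IForm.or A B) u v ↔
      ∃ u' v', (P.Red u (P.orR false u') ∧ P.Red v (P.orR false v') ∧ E A u' v') ∨
        (P.Red u (P.orR true u') ∧ P.Red v (P.orR true v') ∧ E B u' v')) ∧
  (∀ A B u v, E (IForm.imp A B) u v ↔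
      ∃ u' v', P.Red u (P.impR u') ∧ P.Red v (P.impR v') ∧
        ∀ w, P.Of w [] (IForm.underline A) → P.Valid w →
          E B (P.cut [w] u') (P.cut [w] v')) ∧
  (∀ A u v, E (IForm.mu IAnn.infty A) u v ↔
      ∃ ξ : Ordinal.{0}, E (IForm.mu (IAnn.ord ξ) A) u v) ∧
  (∀ A u v, E (IForm.nu IAnn.infty A) u v ↔
      ∀ ξ : Ordinal.{0}, E (IForm.nu (IAnn.ord ξ) A) u v) ∧
  (∀ A (ξ : Ordinal.{0}) u v, E (IForm.mu (IAnn.ord ξ) A) u v ↔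
      ∃ ρ < ξ, ∃ u' v', P.Red u (P.muR u') ∧ P.Red v (P.muR v') ∧
        E (IForm.subst A (IForm.mu (IAnn.ord ρ) A)) u' v') ∧
  (∀ A (ξ : Ordinal.{0}) u v, E (IForm.nu (IAnn.ord ξ) A) u v ↔
      ∃ a b u' v', P.Red u (P.nuR a u') ∧ P.Red v (P.nuR b v') ∧
        ∀ ρ < ξ, E (IForm.subst A (IForm.nu (IAnn.ord ρ) A))
          (P.substInf u' a) (P.substInf v' b))

/-- `u ≡ v` for proofs `u, v` of a sequent `A ⊢ B`: cutting with any closed proof of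
`⊢ A` yields proofs equivalent mod `B`. -/
def Calc.EqHom (P : Calc) (E : IForm → P.Deriv → P.Deriv → Prop)
    (A B : LForm) (u v : P.Deriv) : Prop :=
  ∀ w, P.Of w [] A → P.Valid w → E (LForm.toI B) (P.cut [w] u) (P.cut [w] v)

namespace IForm

theorem subst_var (A : IForm) : subst A var = A := by
  induction A <;> simp_all [subst]

theorem acc_var : Acc prec var := ⟨_, fun _ h => nomatch h⟩

theorem acc_top : Acc prec top := ⟨_, fun _ h => nomatch h⟩

theorem acc_or {A B : IForm} (hA : Acc prec A) (hB : Acc prec B) : Acc prec (or A B) :=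
  ⟨_, fun _ h => by cases h <;> assumption⟩

theorem acc_and {A B : IForm} (hA : Acc prec A) (hB : Acc prec B) : Acc prec (and A B) :=
  ⟨_, fun _ h => by cases h <;> assumption⟩

theorem acc_imp {A B : IForm} (hA : Acc prec A) (hB : Acc prec B) : Acc prec (imp A B) :=
  ⟨_, fun _ h => by cases h <;> assumption⟩

/-- Transfinite induction on the annotation: every predecessor of `μ^ξ X.B` is `B[μ^ρ X.B/X]`
for a smaller `ρ`.  The case `∞` comes last, as it uses all ordinals `ξ`. -/
theorem acc_mu {B : IForm} (hB : ∀ C, Acc prec C → Acc prec (subst B C)) (a : IAnn) :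
    Acc prec (mu a B) := by
  have hord : ∀ ξ : Ordinal.{0}, Acc prec (mu (IAnn.ord ξ) B) := by
    intro ξ
    induction ξ using WellFoundedLT.induction with
    | ind ξ ih =>
      refine ⟨_, fun _ h => ?_⟩
      cases h with
      | muOrd _ hρ => exact hB _ (ih _ hρ)
  cases a with
  | ord ξ => exact hord ξ
  | infty =>
    refine ⟨_, fun _ h => ?_⟩
    cases h with
    | muInfty _ ξ => exact hB _ (hord ξ)

theorem acc_nu {B : IForm} (hB : ∀ C, Acc prec C → Acc prec (subst B C)) (a : IAnn) :
    Acc prec (nu a B) := by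
  have hord : ∀ ξ : Ordinal.{0}, Acc prec (nu (IAnn.ord ξ) B) := by
    intro ξ
    induction ξ using WellFoundedLT.induction with
    | ind ξ ih =>
      refine ⟨_, fun _ h => ?_⟩
      cases h with
      | nuOrd _ hρ => exact hB _ (ih _ hρ)
  cases a with
  | ord ξ => exact hord ξ
  | infty =>
    refine ⟨_, fun _ h => ?_⟩
    cases h with
    | nuInfty _ ξ => exact hB _ (hord ξ)

/-- Quantifying over the accessible `C` inside the induction is what makes the fixpoint cases
work: `C` is there instantiated with approximants of the fixpoint itself. -/
theorem acc_subst (A : IForm) : ∀ C, Acc prec C → Acc prec (subst A C) := by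
  induction A with
  | var => exact fun _ hC => hC
  | top => exact fun _ _ => acc_top
  | or A B ihA ihB => exact fun C hC => acc_or (ihA C hC) (ihB C hC)
  | and A B ihA ihB => exact fun C hC => acc_and (ihA C hC) (ihB C hC)
  | imp A B ihA ihB => exact fun C hC => acc_imp (ihA C hC) (ihB C hC)
  | mu a B ih => exact fun _ _ => acc_mu ih a
  | nu a B ih => exact fun _ _ => acc_nu ih a

end IForm

/-!
STATEMENT 1: The relation `≺` on `I_ID`-formulas is wellfounded.
-/

theorem prec_wellFounded : WellFounded IForm.prec :=
  ⟨fun A => IForm.subst_var A ▸ IForm.acc_subst A IForm.var IForm.acc_var⟩
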